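/- Let x ∈ L²(Ω, ℝᵐ) and let v_1, …, v_p ∈ L²(Ω, ℝⁿ) be pairwise uncorrelated random vectors, i.e. 𝔼_{v_i v_j} = 0 for i ≠ j. For arbitrary matrices A_1, …, A_p ∈ ℝ^{m×n}, set F̄_k = 𝔼_{x v_k} 𝔼_{v_k v_k}^† + A_k (I − 𝔼_{v_k v_k} 𝔼_{v_k v_k}^†) and f̄ = E[x] − Σ_{k=1}^p F̄_k E[v_k]. Then for every f ∈ ℝᵐ and all F_1, …, F_p ∈ ℝ^{m×n}, E[‖x − f − Σ_{k=1}^p F_k v_k‖²] ≥ E[‖x − f̄ − Σ_{k=1}^p F̄_k v_k‖²], and moreover E[‖x − f̄ − Σ_{k=1}^p F̄_k v_k‖²] = tr(𝔼_{xx}) − Σ_{k=1}^p ‖𝔼_{x v_k}(𝔼_{v_k v_k}^{1/2})^†‖², where ‖·‖ is the Frobenius norm. -/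

import Mathlib

/-!
Write `E_k = 𝔼_{v_k v_k}` and `C_k = 𝔼_{x v_k}`. Expanding the second moment of the residual as
variance plus squared mean, and using that the `v_k` are uncorrelated, gives (`errJ_eq`)

`J(f, F) = ‖E[x] - f - ∑ F_k E[v_k]‖² + tr 𝔼_{xx} + ∑ (tr (F_k E_k F_kᵀ) - 2 tr (F_k C_kᵀ))`.

The choice of `f̄` kills the first term, so everything reduces to a quadratic in each `F_k`.
Since `J ≥ 0`, a direction `M` with `M E_k = 0`, along which the quadratic is affine, must satisfy
`tr (M C_kᵀ) = 0`; taking `M = C_k (1 - E_k E_k^†)` yields `C_k E_k E_k^† = C_k`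
(`cov_mul_projection`). As `E_k` is symmetric it commutes with its pseudoinverse
(`IsMP.comm_of_symm`), hence `F̄_k E_k = C_k`, the normal equation. Completing the square with
`E_k = S_k S_kᵀ` proves minimality and leaves the value `-tr (F̄_k E_k F̄_kᵀ)` per index. This is the
stated Frobenius norm, because `C_k S_k^† = F̄_k S_k S_k S_k^† = F̄_k S_k`.
-/

open MeasureTheory Matrix BigOperators

noncomputable def vmean {Ω : Type*} [MeasurableSpace Ω] {n : ℕ} (μ : Measure Ω)
    (g : Ω → Fin n → ℝ) : Fin n → ℝ :=
  fun i => ∫ ω, g ω i ∂μ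

/-- Cross-covariance matrix `𝔼_{gh} = E[g hᵀ] - E[g] E[h]ᵀ`. -/
noncomputable def cov {Ω : Type*} [MeasurableSpace Ω] {m n : ℕ} (μ : Measure Ω)
    (g : Ω → Fin m → ℝ) (h : Ω → Fin n → ℝ) : Matrix (Fin m) (Fin n) ℝ :=
  Matrix.of fun i j => (∫ ω, g ω i * h ω j ∂μ) - (∫ ω, g ω i ∂μ) * (∫ ω, h ω j ∂μ)

/-- `g ∈ L²(Ω, ℝⁿ)`: measurable with `E[‖g‖²] < ∞`. -/
def MemL2 {Ω : Type*} [MeasurableSpace Ω] {n : ℕ} (μ : Measure Ω)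
    (g : Ω → Fin n → ℝ) : Prop :=
  Measurable g ∧ Integrable (fun ω => ∑ i, (g ω i) ^ 2) μ

/-- `P` is the Moore–Penrose pseudoinverse of `M`. -/
def IsMP {m n : ℕ} (M : Matrix (Fin m) (Fin n) ℝ) (P : Matrix (Fin n) (Fin m) ℝ) : Prop :=
  M * P * M = M ∧ P * M * P = P ∧ (M * P)ᵀ = M * P ∧ (P * M)ᵀ = P * M

/-- Squared Frobenius norm `‖M‖² = tr (M Mᵀ)`. -/
noncomputable def sqFrob {m n : ℕ} (M : Matrix (Fin m) (Fin n) ℝ) : ℝ :=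
  Matrix.trace (M * Mᵀ)

/-- The error functional `J(f, F₁, …, F_p) = E[‖x - f - Σ_k F_k v_k‖²]`. -/
noncomputable def errJ {Ω : Type*} [MeasurableSpace Ω] {m n p : ℕ} (μ : Measure Ω)
    (x : Ω → Fin m → ℝ) (v : Fin p → Ω → Fin n → ℝ) (f : Fin m → ℝ)
    (F : Fin p → Matrix (Fin m) (Fin n) ℝ) : ℝ :=
  ∫ ω, ∑ i, (x ω i - f i - ∑ k, (F k).mulVec (v k ω) i) ^ 2 ∂μ

open ProbabilityTheory (covariance variance)

lemma MemL2.memLp {Ω : Type*} [MeasurableSpace Ω] {n : ℕ} {μ : Measure Ω}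
    {g : Ω → Fin n → ℝ} (hg : MemL2 μ g) (i : Fin n) : MemLp (fun ω => g ω i) 2 μ := by
  have hm : Measurable fun ω => g ω i := (measurable_pi_apply i).comp hg.1
  rw [memLp_two_iff_integrable_sq hm.aestronglyMeasurable]
  refine hg.2.mono' (hm.pow_const 2).aestronglyMeasurable (Filter.Eventually.of_forall fun ω => ?_)
  rw [Real.norm_of_nonneg (sq_nonneg _)]
  exact Finset.single_le_sum (f := fun i => g ω i ^ 2) (fun _ _ => sq_nonneg _) (Finset.mem_univ i)

/-- The entries of `cov` are Mathlib's scalar covariances. -/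
lemma cov_apply {Ω : Type*} [MeasurableSpace Ω] {μ : Measure Ω} [IsProbabilityMeasure μ]
    {m n : ℕ} {g : Ω → Fin m → ℝ} {h : Ω → Fin n → ℝ} (hg : MemL2 μ g) (hh : MemL2 μ h)
    (i : Fin m) (j : Fin n) :
    cov μ g h i j = covariance (fun ω => g ω i) (fun ω => h ω j) μ := by
  rw [ProbabilityTheory.covariance_eq_sub (hg.memLp i) (hh.memLp j)]
  rfl

lemma cov_transpose {Ω : Type*} [MeasurableSpace Ω] (μ : Measure Ω)
    {m n : ℕ} (g : Ω → Fin m → ℝ) (h : Ω → Fin n → ℝ) : (cov μ g h)ᵀ = cov μ h g := by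
  ext i j
  simp [cov, mul_comm]

lemma MemL2.memLp_mulVec {Ω : Type*} [MeasurableSpace Ω] {m n : ℕ} {μ : Measure Ω}
    {g : Ω → Fin n → ℝ} (hg : MemL2 μ g) (F : Matrix (Fin m) (Fin n) ℝ) (i : Fin m) :
    MemLp (fun ω => (F *ᵥ g ω) i) 2 μ := by
  simp only [Matrix.mulVec, dotProduct]
  exact memLp_finsetSum _ fun j _ => (hg.memLp j).const_mul (F i j)

lemma integral_mulVec {Ω : Type*} [MeasurableSpace Ω] {μ : Measure Ω} [IsProbabilityMeasure μ]
    {m n : ℕ} {g : Ω → Fin n → ℝ} (hg : MemL2 μ g) (F : Matrix (Fin m) (Fin n) ℝ) (i : Fin m) :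
    ∫ ω, (F *ᵥ g ω) i ∂μ = (F *ᵥ vmean μ g) i := by
  simp only [Matrix.mulVec, dotProduct, vmean]
  rw [integral_finsetSum _ fun j _ =>
    ((hg.memLp j).integrable one_le_two).const_mul (F i j)]
  simp only [integral_const_mul]

lemma covariance_mulVec_right {Ω : Type*} [MeasurableSpace Ω] {μ : Measure Ω}
    [IsProbabilityMeasure μ] {m n l : ℕ} {x : Ω → Fin m → ℝ} {h : Ω → Fin n → ℝ}
    (hx : MemL2 μ x) (hh : MemL2 μ h) (G : Matrix (Fin l) (Fin n) ℝ) (i : Fin m) (j : Fin l) :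
    covariance (fun ω => x ω i) (fun ω => (G *ᵥ h ω) j) μ = (cov μ x h * Gᵀ) i j := by
  simp only [Matrix.mulVec, dotProduct]
  rw [ProbabilityTheory.covariance_fun_sum_right
    (fun a => (hh.memLp a).const_mul (G j a)) (hx.memLp i)]
  simp only [ProbabilityTheory.covariance_const_mul_right, Matrix.mul_apply, cov_apply hx hh,
    Matrix.transpose_apply]
  exact Finset.sum_congr rfl fun _ _ => mul_comm _ _

lemma covariance_mulVec {Ω : Type*} [MeasurableSpace Ω] {μ : Measure Ω}
    [IsProbabilityMeasure μ] {m n : ℕ} {g h : Ω → Fin n → ℝ} (hg : MemL2 μ g) (hh : MemL2 μ h)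
    (F G : Matrix (Fin m) (Fin n) ℝ) (i j : Fin m) :
    covariance (fun ω => (F *ᵥ g ω) i) (fun ω => (G *ᵥ h ω) j) μ
      = (F * cov μ g h * Gᵀ) i j := by
  have hF : (fun ω => (F *ᵥ g ω) i) = fun ω => ∑ a, F i a * g ω a := rfl
  rw [hF, ProbabilityTheory.covariance_fun_sum_left
    (fun a => (hg.memLp a).const_mul (F i a)) (hh.memLp_mulVec G j), Matrix.mul_assoc,
    Matrix.mul_apply]
  refine Finset.sum_congr rfl fun a _ => ?_
  rw [ProbabilityTheory.covariance_const_mul_left, covariance_mulVec_right hg hh]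

/-- The error functional as a quadratic polynomial in `(f, F)`: the squared mean of the residual
plus the sum of the variances of its coordinates. -/
lemma errJ_eq {Ω : Type*} [MeasurableSpace Ω] (μ : Measure Ω) [IsProbabilityMeasure μ]
    {m n p : ℕ} (x : Ω → Fin m → ℝ) (hx : MemL2 μ x)
    (v : Fin p → Ω → Fin n → ℝ) (hv : ∀ k, MemL2 μ (v k))
    (horth : ∀ i j, i ≠ j → cov μ (v i) (v j) = 0)
    (f : Fin m → ℝ) (F : Fin p → Matrix (Fin m) (Fin n) ℝ) :
    errJ μ x v f F
      = ∑ i, (vmean μ x i - f i - ∑ k, (F k *ᵥ vmean μ (v k)) i) ^ 2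
        + (Matrix.trace (cov μ x x)
          + ∑ k, (Matrix.trace (F k * cov μ (v k) (v k) * (F k)ᵀ)
            - 2 * Matrix.trace (F k * (cov μ x (v k))ᵀ))) := by
  have hsum : ∀ i, MemLp (fun ω => ∑ k, (F k *ᵥ v k ω) i) 2 μ := fun i =>
    memLp_finsetSum _ fun k _ => (hv k).memLp_mulVec (F k) i
  have hxf : ∀ i, MemLp (fun ω => x ω i - f i) 2 μ := fun i =>
    (hx.memLp i).sub (memLp_const (f i))
  have hres : ∀ i, MemLp (fun ω => x ω i - f i - ∑ k, (F k *ᵥ v k ω) i) 2 μ := fun i =>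
    (hxf i).sub (hsum i)
  have hmean : ∀ i, ∫ ω, (x ω i - f i - ∑ k, (F k *ᵥ v k ω) i) ∂μ
      = vmean μ x i - f i - ∑ k, (F k *ᵥ vmean μ (v k)) i := fun i => by
    rw [integral_sub ((hxf i).integrable one_le_two) ((hsum i).integrable one_le_two),
      integral_sub ((hx.memLp i).integrable one_le_two) (integrable_const _),
      integral_finsetSum _ fun k _ => ((hv k).memLp_mulVec (F k) i).integrable one_le_two]
    simp only [integral_mulVec (hv _), integral_const, probReal_univ, one_smul]
    rfl
  have hvar : ∀ i, variance (fun ω => x ω i - f i - ∑ k, (F k *ᵥ v k ω) i) μ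
      = cov μ x x i i + ∑ k, ((F k * cov μ (v k) (v k) * (F k)ᵀ) i i
        - 2 * (F k * (cov μ x (v k))ᵀ) i i) := fun i => by
    rw [ProbabilityTheory.variance_fun_sub (hxf i) (hsum i),
      ProbabilityTheory.variance_sub_const (hx.memLp i).aestronglyMeasurable,
      ProbabilityTheory.covariance_sub_const_left ((hx.memLp i).integrable one_le_two),
      ProbabilityTheory.variance_fun_sum (fun k => (hv k).memLp_mulVec (F k) i),
      ProbabilityTheory.covariance_fun_sum_right (fun k => (hv k).memLp_mulVec (F k) i)
        (hx.memLp i), ← ProbabilityTheory.covariance_self (hx.memLp i).aemeasurable,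
      ← cov_apply hx hx]
    have hdiag : ∀ k, ∑ l, covariance (fun ω => (F k *ᵥ v k ω) i)
        (fun ω => (F l *ᵥ v l ω) i) μ = (F k * cov μ (v k) (v k) * (F k)ᵀ) i i := fun k => by
      rw [Finset.sum_eq_single k, covariance_mulVec (hv k) (hv k)]
      · intro l _ hl
        rw [covariance_mulVec (hv k) (hv l), horth k l hl.symm]
        simp
      · simp
    have hcross : ∀ k, covariance (fun ω => x ω i) (fun ω => (F k *ᵥ v k ω) i) μ
        = (F k * (cov μ x (v k))ᵀ) i i := fun k => by
      rw [covariance_mulVec_right hx (hv k), ← Matrix.transpose_apply (_ * _),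
        Matrix.transpose_mul, Matrix.transpose_transpose]
    simp only [hdiag, hcross, Finset.sum_sub_distrib, ← Finset.mul_sum]
    ring
  have hsq : ∀ i, ∫ ω, (x ω i - f i - ∑ k, (F k *ᵥ v k ω) i) ^ 2 ∂μ
      = (vmean μ x i - f i - ∑ k, (F k *ᵥ vmean μ (v k)) i) ^ 2
        + (cov μ x x i i + ∑ k, ((F k * cov μ (v k) (v k) * (F k)ᵀ) i i
        - 2 * (F k * (cov μ x (v k))ᵀ) i i)) := fun i => by
    have h := ProbabilityTheory.variance_eq_sub (hres i)
    rw [hmean i, hvar i] at h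
    rw [h]
    simp only [Pi.pow_apply]
    ring
  rw [errJ, integral_finsetSum _ fun i _ => (hres i).integrable_sq]
  simp only [hsq, Finset.sum_add_distrib, Matrix.trace, Matrix.diag_apply]
  rw [Finset.sum_comm (s := (Finset.univ : Finset (Fin m)))]
  simp only [Finset.sum_sub_distrib, Finset.mul_sum]

/-- For symmetric `M`, both `M * P` and `P * M` are the orthogonal projection onto the range. -/
lemma IsMP.comm_of_symm {n : ℕ} {M P : Matrix (Fin n) (Fin n) ℝ} (h : IsMP M P) (hM : Mᵀ = M) :
    M * P = P * M := by
  obtain ⟨h1, -, h3, h4⟩ := h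
  rw [Matrix.transpose_mul, hM] at h3 h4
  calc M * P = Pᵀ * (M * P * M) := by rw [h1, h3]
    _ = (Pᵀ * M) * (P * M) := by simp only [Matrix.mul_assoc]
    _ = (M * P) * (M * Pᵀ) := by rw [h3, h4]
    _ = (M * P * M) * Pᵀ := by simp only [Matrix.mul_assoc]
    _ = P * M := by rw [h1, h4]

lemma sqFrob_nonneg {m n : ℕ} (M : Matrix (Fin m) (Fin n) ℝ) : 0 ≤ sqFrob M := by
  simp only [sqFrob, Matrix.trace, Matrix.diag_apply, Matrix.mul_apply, Matrix.transpose_apply]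
  exact Finset.sum_nonneg fun i _ => Finset.sum_nonneg fun j _ => mul_self_nonneg _

/-- The rows of `𝔼_{x v_k}` lie in the row space of `𝔼_{v_k v_k}`. Otherwise `J` would be affine
and nonconstant along some line, contradicting `J ≥ 0`. -/
lemma cov_mul_projection {Ω : Type*} [MeasurableSpace Ω] (μ : Measure Ω) [IsProbabilityMeasure μ]
    {m n p : ℕ} (x : Ω → Fin m → ℝ) (hx : MemL2 μ x)
    (v : Fin p → Ω → Fin n → ℝ) (hv : ∀ k, MemL2 μ (v k))
    (horth : ∀ i j, i ≠ j → cov μ (v i) (v j) = 0) (k : Fin p)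
    (P : Matrix (Fin n) (Fin n) ℝ) (hP : IsMP (cov μ (v k) (v k)) P) :
    cov μ x (v k) * (1 - cov μ (v k) (v k) * P) = 0 := by
  set C := cov μ x (v k) with hC
  set E := cov μ (v k) (v k) with hE
  set M := C * (1 - E * P) with hM
  have hME : M * E = 0 := by
    rw [hM, Matrix.mul_assoc, Matrix.sub_mul, hP.1, Matrix.one_mul, sub_self, Matrix.mul_zero]
  -- `1 - E * P` is symmetric and idempotent
  have hMC : M * Mᵀ = M * Cᵀ := by
    have hs : (1 - E * P)ᵀ = 1 - E * P := by
      rw [Matrix.transpose_sub, Matrix.transpose_one, hP.2.2.1]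
    have hi : (1 - E * P) * (1 - E * P) = 1 - E * P := by
      have : E * P * (E * P) = E * P := by rw [← Matrix.mul_assoc, hP.1]
      rw [Matrix.mul_sub, Matrix.sub_mul 1 (E * P) (E * P), this]
      simp
    rw [hM, Matrix.transpose_mul, hs, Matrix.mul_assoc, ← Matrix.mul_assoc (1 - E * P), hi,
      Matrix.mul_assoc]
  have key : ∀ t : ℝ, 0 ≤ Matrix.trace (cov μ x x) - 2 * (t * Matrix.trace (M * Cᵀ)) := by
    intro t
    let F : Fin p → Matrix (Fin m) (Fin n) ℝ := Pi.single k (t • M)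
    have h := errJ_eq μ x hx v hv horth
      (fun i => vmean μ x i - ∑ l, (F l *ᵥ vmean μ (v l)) i) F
    have h0 : 0 ≤ errJ μ x v (fun i => vmean μ x i - ∑ l, (F l *ᵥ vmean μ (v l)) i) F :=
      integral_nonneg fun ω => Finset.sum_nonneg fun i _ => sq_nonneg _
    rw [h, Finset.sum_eq_single k (f := fun l => _ - _)] at h0
    · have hFk : F k = t • M := Pi.single_eq_same k _
      rw [hFk, ← hE, ← hC] at h0
      simpa [hME, sub_eq_add_neg] using h0
    · intro l _ hl
      have hFl : F l = 0 := Pi.single_eq_of_ne hl _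
      simp [hFl]
    · simp
  have htr : Matrix.trace (M * Cᵀ) = 0 := by
    by_contra hne
    have h := key ((Matrix.trace (cov μ x x) + 1) / (2 * Matrix.trace (M * Cᵀ)))
    have e : 2 * ((Matrix.trace (cov μ x x) + 1) / (2 * Matrix.trace (M * Cᵀ))
        * Matrix.trace (M * Cᵀ)) = Matrix.trace (cov μ x x) + 1 := by
      field_simp
    linarith
  rw [← hMC, ← Matrix.conjTranspose_eq_transpose_of_trivial] at htr
  exact Matrix.trace_mul_conjTranspose_self_eq_zero_iff.1 htr

/-- Completing the square around a solution `G` of the normal equation `G * E = C`. -/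
lemma trace_complete_square {m n : ℕ} (F G C : Matrix (Fin m) (Fin n) ℝ)
    (E S : Matrix (Fin n) (Fin n) ℝ) (hS : Sᵀ = S) (hSE : S * S = E) (hG : G * E = C) :
    Matrix.trace (F * E * Fᵀ) - 2 * Matrix.trace (F * Cᵀ)
      = sqFrob ((F - G) * S) - sqFrob (G * S) := by
  have hsq : ∀ H : Matrix (Fin m) (Fin n) ℝ, sqFrob (H * S) = Matrix.trace (H * E * Hᵀ) := by
    intro H
    rw [sqFrob, Matrix.transpose_mul, hS, ← hSE]
    simp only [Matrix.mul_assoc]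
  have hE : Eᵀ = E := by rw [← hSE, Matrix.transpose_mul, hS]
  have hsymm : Matrix.trace (G * E * Fᵀ) = Matrix.trace (F * E * Gᵀ) := by
    rw [← Matrix.trace_transpose]
    simp only [Matrix.transpose_mul, Matrix.transpose_transpose, hE, Matrix.mul_assoc]
  have hFC : F * Cᵀ = F * E * Gᵀ := by rw [← hG, Matrix.transpose_mul, hE, Matrix.mul_assoc]
  rw [hsq, hsq, hFC]
  simp only [Matrix.sub_mul, Matrix.mul_sub, Matrix.transpose_sub, Matrix.trace_sub, hsymm]
  ring

theorem optimal_unconstrained_orthogonal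
    {Ω : Type*} [MeasurableSpace Ω] (μ : Measure Ω) [IsProbabilityMeasure μ]
    {m n p : ℕ} (x : Ω → Fin m → ℝ) (hx : MemL2 μ x)
    (v : Fin p → Ω → Fin n → ℝ) (hv : ∀ k, MemL2 μ (v k))
    (horth : ∀ i j, i ≠ j → cov μ (v i) (v j) = 0)
    (P : Fin p → Matrix (Fin n) (Fin n) ℝ)
    (hP : ∀ k, IsMP (cov μ (v k) (v k)) (P k))
    (S : Fin p → Matrix (Fin n) (Fin n) ℝ)
    (hSpsd : ∀ k, (S k).PosSemidef)
    (hSsq : ∀ k, S k * S k = cov μ (v k) (v k))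
    (Q : Fin p → Matrix (Fin n) (Fin n) ℝ)
    (hQ : ∀ k, IsMP (S k) (Q k))
    (A : Fin p → Matrix (Fin m) (Fin n) ℝ)
    (Fbar : Fin p → Matrix (Fin m) (Fin n) ℝ)
    (hFbar : ∀ k, Fbar k = cov μ x (v k) * P k + A k * (1 - cov μ (v k) (v k) * P k))
    (fbar : Fin m → ℝ)
    (hfbar : fbar = vmean μ x - ∑ k, (Fbar k).mulVec (vmean μ (v k))) :
    (∀ (f : Fin m → ℝ) (F : Fin p → Matrix (Fin m) (Fin n) ℝ),
      errJ μ x v f F ≥ errJ μ x v fbar Fbar) ∧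
    errJ μ x v fbar Fbar
      = Matrix.trace (cov μ x x) - ∑ k, sqFrob (cov μ x (v k) * Q k) := by
  have hS : ∀ k, (S k)ᵀ = S k := fun k => by
    rw [← Matrix.conjTranspose_eq_transpose_of_trivial]
    exact (hSpsd k).1
  have hnormal : ∀ k, Fbar k * cov μ (v k) (v k) = cov μ x (v k) := fun k => by
    have h := cov_mul_projection μ x hx v hv horth k (P k) (hP k)
    rw [Matrix.mul_sub, Matrix.mul_one, sub_eq_zero] at h
    rw [hFbar k, Matrix.add_mul, Matrix.mul_assoc, Matrix.mul_assoc, Matrix.sub_mul, (hP k).1,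
      ← (hP k).comm_of_symm (cov_transpose μ _ _), ← h]
    simp
  have hcs := fun (F : Fin p → Matrix (Fin m) (Fin n) ℝ) (k : Fin p) =>
    trace_complete_square (F k) (Fbar k) _ _ (S k) (hS k) (hSsq k) (hnormal k)
  have hval : errJ μ x v fbar Fbar
      = Matrix.trace (cov μ x x) - ∑ k, sqFrob (Fbar k * S k) := by
    have h0 : ∀ i, vmean μ x i - fbar i - ∑ k, (Fbar k *ᵥ vmean μ (v k)) i = 0 := fun i => by
      simp [hfbar, Finset.sum_apply]
    rw [errJ_eq μ x hx v hv horth]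
    simp only [h0, hcs Fbar]
    simp [sqFrob, sub_eq_add_neg]
  refine ⟨fun f F => ?_, ?_⟩
  · rw [ge_iff_le, hval, errJ_eq μ x hx v hv horth]
    simp only [hcs F, Finset.sum_sub_distrib]
    have h1 : 0 ≤ ∑ i, (vmean μ x i - f i - ∑ k, (F k *ᵥ vmean μ (v k)) i) ^ 2 :=
      Finset.sum_nonneg fun i _ => sq_nonneg _
    have h2 : 0 ≤ ∑ k, sqFrob ((F k - Fbar k) * S k) :=
      Finset.sum_nonneg fun k _ => sqFrob_nonneg _
    linarith
  · rw [hval]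
    congr 1
    refine Finset.sum_congr rfl fun k _ => ?_
    have hCQ : cov μ x (v k) * Q k = Fbar k * S k := by
      rw [← hnormal k, ← hSsq k, Matrix.mul_assoc, Matrix.mul_assoc (S k),
        (hQ k).comm_of_symm (hS k), ← Matrix.mul_assoc (S k), (hQ k).1]
    rw [hCQ]
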